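/- Let q ≥ 2 be an integer, let T be a locally finite tree on a vertex set V that is regular of degree q+1, with graph distance d, and let z : ℤ → V be a geodesic line, i.e. d(z(m), z(n)) = |m − n| for all m, n ∈ ℤ. Then there exists a graph automorphism g of T translating the line by one step: g(z(k)) = z(k−1) for all k ∈ ℤ. -/

import Mathlib

inductive TreeShift {V : Type*} {q : ℕ} (p : V → V) (lab : V → Fin q) (ch : V → Fin q → V)
    (z : ℤ → V) (s : ℤ) : V → V → Prop
  | base (k : ℤ) : TreeShift p lab ch z s (z k) (z (k + s))
  | step (v w : V) : TreeShift p lab ch z s (p v) w → TreeShift p lab ch z s v (ch w (lab v))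

theorem shift_of_labels {V : Type*} {q : ℕ} (T : SimpleGraph V) (p : V → V)
    (lab : V → Fin q) (ch : V → Fin q → V) (z : ℤ → V) (o : Fin q)
    (hz : Function.Injective z)
    (hadj : ∀ v w, T.Adj v w ↔ (w = p v ∨ v = p w))
    (hpz : ∀ k, p (z k) = z (k - 1))
    (hlz : ∀ k, lab (z k) = o)
    (hpc : ∀ v i, p (ch v i) = v) (hlc : ∀ v i, lab (ch v i) = i)
    (hcl : ∀ v, ch (p v) (lab v) = v)
    (hind : ∀ P : V → Prop, (∀ k, P (z k)) → (∀ v, P (p v) → P v) → ∀ v, P v) :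
    ∃ g : T ≃g T, ∀ k : ℤ, g (z k) = z (k - 1) := by
  have total : ∀ s v, ∃ w, TreeShift p lab ch z s v w := by
    intro s
    apply hind
    · intro k; exact ⟨_, .base k⟩
    · rintro v ⟨w, hw⟩; exact ⟨_, .step v w hw⟩
  have symm : ∀ s v w, TreeShift p lab ch z s v w → TreeShift p lab ch z (-s) w v := by
    intro s v w h
    induction h with
    | base k =>
      have := TreeShift.base (p := p) (lab := lab) (ch := ch) (z := z) (s := -s) (k + s)
      simpa using this
    | step v w h ih =>
      have := TreeShift.step (p := p) (lab := lab) (ch := ch) (z := z) (s := -s)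
        (ch w (lab v)) (p v) (by rw [hpc]; exact ih)
      rwa [hlc, hcl] at this
  have inv : ∀ s v w, TreeShift p lab ch z s v w →
      TreeShift p lab ch z s (p v) (p w) ∧ lab w = lab v := by
    intro s v w h
    cases h with
    | base k =>
      rw [hpz, hpz, hlz, hlz]
      refine ⟨?_, rfl⟩
      have := TreeShift.base (p := p) (lab := lab) (ch := ch) (z := z) (s := s) (k - 1)
      rwa [show k - 1 + s = k + s - 1 by ring] at this
    | step _ w h => rw [hpc, hlc]; exact ⟨h, rfl⟩
  have hchz : ∀ k, ch (z (k - 1)) o = z k := by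
    intro k
    have := hcl (z k)
    rwa [hpz, hlz] at this
  have line : ∀ s v w, TreeShift p lab ch z s v w → ∀ k, v = z k → w = z (k + s) := by
    intro s v w h
    induction h with
    | base k => intro k' hk; rw [hz hk]
    | step v w h ih =>
      rintro k rfl
      rw [ih (k - 1) (hpz k), hlz, show k - 1 + s = k + s - 1 by ring, hchz]
  have func : ∀ s v w w', TreeShift p lab ch z s v w → TreeShift p lab ch z s v w' → w = w' := by
    intro s
    have : ∀ v, ∀ w w', TreeShift p lab ch z s v w → TreeShift p lab ch z s v w' → w = w' := by
      apply hind
      · intro k w w' h h'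
        rw [line s _ _ h k rfl, line s _ _ h' k rfl]
      · intro v ih w w' h h'
        obtain ⟨a, b⟩ := inv _ _ _ h
        obtain ⟨a', b'⟩ := inv _ _ _ h'
        rw [← hcl w, ← hcl w', ih _ _ a a', b, b']
    exact this
  choose g hg using total
  have gp : ∀ s v, g s (p v) = p (g s v) := fun s v =>
    func s _ _ _ (hg s (p v)) (inv _ _ _ (hg s v)).1
  have gi : ∀ s v, g (-s) (g s v) = v := fun s v =>
    func (-s) _ _ _ (hg (-s) (g s v)) (symm _ _ _ (hg s v))
  have gi1 := gi (-1)
  have gi2 := gi (-(-1))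
  rw [neg_neg (-1 : ℤ) |>.symm] at gi2
  simp only [neg_neg] at gi1 gi2
  let e : V ≃ V := ⟨g (-1), g 1, gi1, gi2⟩
  refine ⟨⟨e, ?_⟩, ?_⟩
  · intro a b
    rw [hadj, hadj]
    change g (-1) b = p (g (-1) a) ∨ g (-1) a = p (g (-1) b) ↔ _
    rw [← gp, ← gp]
    have hi : Function.Injective (g (-1)) := e.injective
    rw [hi.eq_iff, hi.eq_iff]
  · intro k
    exact line (-1) _ _ (hg (-1) (z k)) k rfl

theorem closer_unique {V : Type*} (T : SimpleGraph V) (htree : T.IsTree) (r v u u' : V)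
    (h : T.Adj v u) (h' : T.Adj v u') (hd : T.dist u r < T.dist v r)
    (hd' : T.dist u' r < T.dist v r) : u = u' := by
  have key : ∀ u, T.Adj v u → T.dist u r < T.dist v r →
      ∃ P : T.Walk v r, P.IsPath ∧ P.snd = u := by
    intro u h hd
    obtain ⟨P, hP, hl⟩ := htree.connected.exists_path_of_dist u r
    refine ⟨SimpleGraph.Walk.cons h P, ?_, by simp⟩
    apply SimpleGraph.Walk.isPath_of_length_eq_dist
    have := SimpleGraph.dist_le (SimpleGraph.Walk.cons h P)
    simp only [SimpleGraph.Walk.length_cons] at *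
    omega
  obtain ⟨P, hP, h1⟩ := key u h hd
  obtain ⟨Q, hQ, h2⟩ := key u' h' hd'
  have := htree.isAcyclic.path_unique ⟨P, hP⟩ ⟨Q, hQ⟩
  have : P = Q := congrArg Subtype.val this
  rw [← h1, ← h2, this]

theorem closer_exists {V : Type*} (T : SimpleGraph V) (htree : T.IsTree) (r v : V)
    (hd : 0 < T.dist v r) : ∃ u, T.Adj v u ∧ T.dist u r < T.dist v r := by
  obtain ⟨P, hP, hl⟩ := htree.connected.exists_path_of_dist v r
  cases P with
  | nil => simp at hd
  | cons h Q =>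
    refine ⟨_, h, ?_⟩
    have := SimpleGraph.dist_le Q
    simp only [SimpleGraph.Walk.length_cons] at hl
    omega

theorem busemann {V : Type*} (T : SimpleGraph V) (htree : T.IsTree) (z : ℤ → V)
    (hgeo : ∀ m n : ℤ, (T.dist (z m) (z n) : ℤ) = |m - n|) (v : V) :
    ∃ b : ℤ, ∃ N : ℕ, ∀ n : ℕ, N ≤ n → (T.dist v (z (-n)) : ℤ) = b + n := by
  set D := T.dist (z 0) v with hD
  have hlow : ∀ n : ℕ, n ≤ T.dist v (z (-n)) + D := by
    intro n
    have h1 := htree.connected.dist_triangle (u := z 0) (v := v) (w := z (-n))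
    have h2 := hgeo 0 (-n)
    simp at h2
    omega
  have hstep : ∀ n : ℕ, T.dist v (z (-(n + 1 : ℕ))) ≤ T.dist v (z (-n)) + 1 := by
    intro n
    have h1 := htree.connected.dist_triangle (u := v) (v := z (-n)) (w := z (-(n + 1 : ℕ)))
    have h2 := hgeo (-n) (-(n + 1 : ℕ))
    push_cast at h2
    rw [show -(n : ℤ) - -((n : ℤ) + 1) = 1 by ring, abs_one] at h2
    push_cast at h1 ⊢
    omega
  let a : ℕ → ℕ := fun n => T.dist v (z (-n)) + D - n
  have ha : Antitone a := antitone_nat_of_succ_le (by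
    intro n
    have := hstep n
    simp only [a]
    omega)
  obtain ⟨N, hN⟩ := Nat.sInf_mem (Set.range_nonempty a)
  refine ⟨(a N : ℤ) - D, N, fun n hn => ?_⟩
  have h1 : a N = a n := le_antisymm (hN ▸ Nat.sInf_le ⟨n, rfl⟩) (ha hn)
  have h2 := hlow n
  rw [h1]
  simp only [a]
  omega

theorem exists_parent {V : Type*} (T : SimpleGraph V) (htree : T.IsTree)
    [T.LocallyFinite] (z : ℤ → V)
    (hgeo : ∀ m n : ℤ, (T.dist (z m) (z n) : ℤ) = |m - n|) :
    ∃ p : V → V, (∀ v w, T.Adj v w ↔ (w = p v ∨ v = p w)) ∧ (∀ k, p (z k) = z (k - 1)) ∧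
      ∀ v, p (p v) ≠ v := by
  choose b N hb using busemann T htree z hgeo
  have hbz : ∀ k, b (z k) = k := by
    intro k
    have h1 := hb (z k) (N (z k) + k.natAbs) (by omega)
    rw [hgeo, abs_of_nonneg (by omega)] at h1
    omega
  have hb1 : ∀ v w, T.Adj v w → b v = b w + 1 ∨ b w = b v + 1 := by
    intro v w h
    have h1 := hb v (max (N v) (N w)) (le_max_left _ _)
    have h2 := hb w (max (N v) (N w)) (le_max_right _ _)
    have := htree.dist_eq_dist_add_one_of_adj (z (-(max (N v) (N w) : ℕ))) h
    rw [T.dist_comm, T.dist_comm (v := w)] at this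
    omega
  have huniq : ∀ v u u', T.Adj v u → T.Adj v u' → b u < b v → b u' < b v → u = u' := by
    intro v u u' h h' hl hl'
    let n := N v + N u + N u'
    have h1 := hb v n (by omega)
    have h2 := hb u n (by omega)
    have h3 := hb u' n (by omega)
    exact closer_unique T htree (z (-n)) v u u' h h' (by omega) (by omega)
  have hex : ∀ v, ∃ u, T.Adj v u ∧ b u < b v := by
    intro v
    let n := N v + (∑ u ∈ T.neighborFinset v, N u) + (b v).natAbs + 1
    have h1 := hb v n (by omega)
    obtain ⟨u, hu, hlt⟩ := closer_exists T htree (z (-n)) v (by omega)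
    refine ⟨u, hu, ?_⟩
    have h4 : N u ≤ ∑ u ∈ T.neighborFinset v, N u :=
      Finset.single_le_sum (f := N) (fun _ _ => Nat.zero_le _) (by simpa using hu)
    have h2 := hb u n (by omega)
    omega
  choose p hp hpb using hex
  refine ⟨p, ?_, ?_, ?_⟩
  · intro v w
    constructor
    · intro h
      rcases hb1 v w h with h1 | h1
      · left; exact huniq v _ _ h (hp v) (by omega) (hpb v)
      · right; exact huniq w _ _ h.symm (hp w) (by omega) (hpb w)
    · rintro (rfl | rfl)
      · exact hp v
      · exact (hp w).symm
  · intro k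
    refine huniq (z k) _ _ (hp _) ?_ (hpb _) (by rw [hbz, hbz]; omega)
    rw [← SimpleGraph.dist_eq_one_iff_adj]
    have := hgeo k (k - 1)
    rw [show k - (k - 1) = 1 by ring, abs_one] at this
    exact_mod_cast this
  · intro v h
    have h1 := hpb v
    have h2 := hpb (p v)
    rw [h] at h2
    omega

theorem exists_labels {V : Type*} (q : ℕ) (hq : 2 ≤ q) (T : SimpleGraph V)
    [T.LocallyFinite] (hreg : T.IsRegularOfDegree (q + 1)) (p : V → V) (z : ℤ → V) (o : Fin q)
    (hz : Function.Injective z)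
    (hadj : ∀ v w, T.Adj v w ↔ (w = p v ∨ v = p w))
    (hpz : ∀ k, p (z k) = z (k - 1)) (hpp : ∀ v, p (p v) ≠ v) (v : V) :
    ∃ (lab : V → Fin q) (ch : Fin q → V), (∀ i, p (ch i) = v ∧ lab (ch i) = i) ∧
      (∀ w, p w = v → ch (lab w) = w) ∧ ∀ k, v = z (k - 1) → lab (z k) = o := by
  classical
  let S : Finset V := (T.neighborFinset v).erase (p v)
  have hS : ∀ w, w ∈ S ↔ p w = v := by
    intro w
    simp only [S, Finset.mem_erase, SimpleGraph.mem_neighborFinset, hadj]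
    constructor
    · rintro ⟨h, h' | h'⟩
      · exact absurd h' h
      · exact h'.symm
    · rintro rfl
      exact ⟨fun h => hpp w h.symm, Or.inr rfl⟩
  have hc : S.card = q := by
    rw [Finset.card_erase_of_mem, SimpleGraph.card_neighborFinset_eq_degree, hreg v]
    · simp
    · simp [hadj]
  let e : S ≃ Fin q := S.equivFinOfCardEq hc
  have hx : ∃ x : S, ∀ k, v = z (k - 1) → z k = x := by
    by_cases h : ∃ k, v = z (k - 1)
    · obtain ⟨k, hk⟩ := h
      refine ⟨⟨z k, (hS _).2 (by rw [hpz, hk])⟩, fun k' hk' => ?_⟩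
      have := hz (hk.symm.trans hk')
      rw [show k' = k by omega]
    · exact ⟨e.symm o, fun k hk => absurd ⟨k, hk⟩ h⟩
  obtain ⟨x, hx⟩ := hx
  let f : S ≃ Fin q := e.trans (Equiv.swap (e x) o)
  have hf : f x = o := by simp [f]
  refine ⟨fun w => if h : w ∈ S then f ⟨w, h⟩ else o, fun i => f.symm i, ?_, ?_, ?_⟩
  · intro i
    exact ⟨(hS _).1 (f.symm i).2, by simp⟩
  · intro w hw
    simp [(hS w).2 hw]
  · intro k hk
    rw [hx k hk]
    simp [hf]

theorem stmt_17 (q : ℕ) (hq : 2 ≤ q)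
    {V : Type*} (T : SimpleGraph V) (htree : T.IsTree)
    [T.LocallyFinite] (hreg : T.IsRegularOfDegree (q + 1))
    (z : ℤ → V)
    (hgeo : ∀ m n : ℤ, (T.dist (z m) (z n) : ℤ) = |m - n|) :
    ∃ g : T ≃g T, ∀ k : ℤ, g (z k) = z (k - 1) := by
  have hz : Function.Injective z := by
    intro m n h
    have := hgeo m n
    rw [h, SimpleGraph.dist_self] at this
    have := abs_eq_zero.1 this.symm
    omega
  obtain ⟨p, hadj, hpz, hpp⟩ := exists_parent T htree z hgeo
  let o : Fin q := ⟨0, by omega⟩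
  choose lab ch h1 h2 h3 using exists_labels q hq T hreg p z o hz hadj hpz hpp
  refine shift_of_labels T p (fun v => lab (p v) v) ch z o hz hadj hpz ?_ ?_ ?_ ?_ ?_
  · intro k
    exact h3 _ k (hpz k)
  · intro v i; exact (h1 v i).1
  · intro v i
    simp only [(h1 v i).1, (h1 v i).2]
  · intro v; exact h2 (p v) v rfl
  · intro P hP hs v
    have main : ∀ v, ∃ n : ℕ, ∃ k, p^[n] v = z k := by
      intro v
      have walk : ∀ a c : V, T.Walk a c → (∃ n : ℕ, ∃ k, p^[n] c = z k) →
          ∃ n : ℕ, ∃ k, p^[n] a = z k := by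
        intro a c W hc
        induction W with
        | nil => exact hc
        | @cons a w _ h W ih =>
          obtain ⟨n, k, hn⟩ := ih hc
          rcases (hadj a w).1 h with h | h
          · exact ⟨n + 1, k, by rw [Function.iterate_succ_apply, ← h, hn]⟩
          · cases n with
            | zero => exact ⟨0, k - 1, by rw [← hpz, ← hn, h]; rfl⟩
            | succ n => exact ⟨n, k, by rw [h, ← Function.iterate_succ_apply, hn]⟩
      obtain ⟨W⟩ := htree.connected.preconnected v (z 0)
      exact walk v (z 0) W ⟨0, 0, rfl⟩
    obtain ⟨n, k, hn⟩ := main v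
    induction n generalizing v with
    | zero => rw [show v = z k from hn]; exact hP k
    | succ n ih => exact hs v (ih (p v) hn)
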